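/- The corona K_3 ∘ K_3 of the triangle with the triangle satisfies γ_MR(K_3 ∘ K_3) = −1. -/

import Mathlib

open Finset

namespace MRD

variable {V : Type*}

open scoped Classical

/-- Sum of `f` over the closed neighborhood of `v` in `G`:
`f(N[v]) = \sum_{u \in N[v]} f(u)`. -/
noncomputable def closedNbhdSum [Fintype V] (G : SimpleGraph V) (f : V → ℤ) (v : V) : ℤ :=
  ∑ u ∈ Finset.univ.filter (fun u => G.Adj v u ∨ u = v), f u

/-- `f : V → {-1, 1, 2}` is a Majority Roman Dominating Function (MRDF) on `G`:
(i) `f(N[v]) ≥ 1` for at least half of the vertices, and (ii) every vertex with value `-1`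
is adjacent to a vertex with value `2`. -/
noncomputable def IsMRDF [Fintype V] (G : SimpleGraph V) (f : V → ℤ) : Prop :=
  (∀ v, f v = -1 ∨ f v = 1 ∨ f v = 2) ∧
  Fintype.card V ≤ 2 * (Finset.univ.filter (fun v => 1 ≤ closedNbhdSum G f v)).card ∧
  (∀ u, f u = -1 → ∃ w, G.Adj u w ∧ f w = 2)

/-- The majority Roman domination number `γ_MR(G)`: the minimum weight
`w(f) = ∑_v f(v)` over all MRDFs `f` on `G`. -/
noncomputable def mrdNum [Fintype V] (G : SimpleGraph V) : ℤ :=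
  sInf {w : ℤ | ∃ f : V → ℤ, IsMRDF G f ∧ w = ∑ v, f v}

/-- The join `G ∨ H` of two simple graphs: disjoint union plus all edges between the parts. -/
def join {α β : Type*} (G : SimpleGraph α) (H : SimpleGraph β) : SimpleGraph (α ⊕ β) where
  Adj x y :=
    match x, y with
    | .inl a, .inl b => G.Adj a b
    | .inr a, .inr b => H.Adj a b
    | .inl _, .inr _ => True
    | .inr _, .inl _ => True
  symm := ⟨by rintro (a | a) (b | b) h <;> simp_all [SimpleGraph.adj_comm]⟩
  loopless := ⟨by rintro (a | a) h <;> simp_all⟩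

/-- The corona `G ∘ H` of two simple graphs: one copy of `G` and `|V(G)|` copies of `H`,
where the `v`-th vertex of `G` is joined to every vertex of the `v`-th copy of `H`. -/
def corona {α β : Type*} (G : SimpleGraph α) (H : SimpleGraph β) : SimpleGraph (α ⊕ α × β) where
  Adj x y :=
    match x, y with
    | .inl u, .inl v => G.Adj u v
    | .inr p, .inr q => p.1 = q.1 ∧ H.Adj p.2 q.2
    | .inl u, .inr p => u = p.1
    | .inr p, .inl u => u = p.1
  symm := ⟨by
    rintro (u | ⟨u, x⟩) (v | ⟨v, y⟩) h <;> simp_all [SimpleGraph.adj_comm, eq_comm]⟩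
  loopless := ⟨by rintro (u | ⟨u, x⟩) h <;> simp_all⟩

/-- `S` is a dominating set of `G`. -/
def IsDomSet (G : SimpleGraph V) (S : Finset V) : Prop :=
  ∀ v, v ∉ S → ∃ u ∈ S, G.Adj v u

/-- The domination number `γ(G)`. -/
noncomputable def domNum [Fintype V] (G : SimpleGraph V) : ℕ :=
  sInf {k | ∃ S : Finset V, IsDomSet G S ∧ S.card = k}

/-- A set of vertices is independent if no two of its vertices are adjacent. -/
def IsIndepSet (G : SimpleGraph V) (S : Finset V) : Prop :=
  ∀ a ∈ S, ∀ b ∈ S, ¬ G.Adj a b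

/-- The independence number `β₀(G)`. -/
noncomputable def indepNum [Fintype V] (G : SimpleGraph V) : ℕ :=
  sSup {k | ∃ S : Finset V, IsIndepSet G S ∧ S.card = k}

/-- The cocktail party graph `K_{2n} - M` (complete graph minus a perfect matching),
realized on `Fin n × Fin 2`: `(i,a)` and `(j,b)` are adjacent iff `i ≠ j`. -/
def cocktail (n : ℕ) : SimpleGraph (Fin n × Fin 2) where
  Adj x y := x.1 ≠ y.1
  symm := ⟨fun _ _ h => h.symm⟩
  loopless := ⟨fun _ h => h rfl⟩

end MRD

/-!
In `G ∘ K_m` the closed neighbourhood of a leaf is its whole block, that is, a centre together with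
its copy of `K_m`. If some leaf of a block has value `-1`, then the block contains a `2`, so for
`m ≥ 2` every block weighs at least `2 - m`. The leaves of a block satisfy the majority condition
only together, namely when the block weighs at least `1`, so even if all centres are satisfied, a
majority forces a number of blocks to weigh `1` or more. The resulting bound on the total weight is
attained by putting `2` on every centre and giving each block weight exactly `1` or `2 - m`.
-/

namespace MRD

theorem IsMRDF.neg_one_le {V : Type*} [Fintype V] {G : SimpleGraph V} {f : V → ℤ}
    (hf : IsMRDF G f) (v : V) : -1 ≤ f v := by
  have := hf.1 v
  omega

section ClosedNbhdSum

variable {α : Type*} [Fintype α]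

theorem closedNbhdSum_eq_sum_ite (G : SimpleGraph α) [DecidableEq α] [DecidableRel G.Adj]
    (f : α → ℤ) (v : α) :
    closedNbhdSum G f v = ∑ u, if G.Adj v u ∨ u = v then f u else 0 := by
  rw [closedNbhdSum, sum_filter]
  congr!

theorem closedNbhdSum_const (G : SimpleGraph α) [DecidableRel G.Adj] (c : ℤ) (v : α) :
    closedNbhdSum G (fun _ ↦ c) v = (G.degree v + 1) * c := by
  classical
  have closedNbhd_eq : ({u | G.Adj v u ∨ u = v} : Finset α) = insert v (G.neighborFinset v) := by
    ext u
    simp [or_comm]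
  rw [closedNbhdSum_eq_sum_ite, ← sum_filter, closedNbhd_eq, sum_const,
    card_insert_of_notMem (G.notMem_neighborFinset_self v), G.card_neighborFinset_eq_degree]
  simp

end ClosedNbhdSum

section CoronaAdj

variable {α β : Type*} (G : SimpleGraph α) (H : SimpleGraph β)

@[simp]
theorem corona_adj_inl_inl {a a' : α} : (corona G H).Adj (.inl a) (.inl a') ↔ G.Adj a a' := Iff.rfl

@[simp]
theorem corona_adj_inl_inr {a : α} {p : α × β} :
    (corona G H).Adj (.inl a) (.inr p) ↔ a = p.1 := Iff.rfl

@[simp]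
theorem corona_adj_inr_inl {a : α} {p : α × β} :
    (corona G H).Adj (.inr p) (.inl a) ↔ a = p.1 := Iff.rfl

@[simp]
theorem corona_adj_inr_inr {p q : α × β} :
    (corona G H).Adj (.inr p) (.inr q) ↔ p.1 = q.1 ∧ H.Adj p.2 q.2 := Iff.rfl

end CoronaAdj

section Blocks

variable {α β : Type*} [Fintype β]

/-- The weight of a block of a corona: the value at the centre `a` plus the values on the copy of
the second graph attached to `a`. -/
def blockWeight (f : α ⊕ α × β → ℤ) (a : α) : ℤ :=
  f (.inl a) + ∑ b, f (.inr (a, b))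

variable [Fintype α]

theorem sum_blockWeight (f : α ⊕ α × β → ℤ) : ∑ a, blockWeight f a = ∑ v, f v := by
  simp only [blockWeight, sum_add_distrib, Fintype.sum_sum_type, Fintype.sum_prod_type]

theorem closedNbhdSum_corona_inl (G : SimpleGraph α) (H : SimpleGraph β) (f : α ⊕ α × β → ℤ)
    (a : α) :
    closedNbhdSum (corona G H) f (.inl a) =
      closedNbhdSum G (fun u ↦ f (.inl u)) a + ∑ b, f (.inr (a, b)) := by
  classical
  simp [closedNbhdSum_eq_sum_ite, Fintype.sum_prod_type_right]

theorem closedNbhdSum_corona_top_inr (G : SimpleGraph α) (f : α ⊕ α × β → ℤ) (a : α) (b : β) :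
    closedNbhdSum (corona G (⊤ : SimpleGraph β)) f (.inr (a, b)) = blockWeight f a := by
  classical
  have mem_block (p : α × β) :
      ((a = p.1 ∧ b ≠ p.2) ∨ p = (a, b)) ↔ a = p.1 := by grind
  simp [closedNbhdSum_eq_sum_ite, blockWeight, mem_block, Fintype.sum_prod_type_right]

/-- The centres of the blocks of weight at least `1`: in `G ∘ K_m` these are exactly the blocks
whose leaves count towards the majority. -/
def heavyBlocks (f : α ⊕ α × β → ℤ) : Finset α :=
  {a | 1 ≤ blockWeight f a}

theorem card_filter_closedNbhdSum_corona_top (G : SimpleGraph α) (f : α ⊕ α × β → ℤ) :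
    #{v | 1 ≤ closedNbhdSum (corona G (⊤ : SimpleGraph β)) f v} =
      #{a | 1 ≤ closedNbhdSum (corona G (⊤ : SimpleGraph β)) f (.inl a)} +
        #(heavyBlocks f) * Fintype.card β := by
  simp only [heavyBlocks, card_filter, Fintype.sum_sum_type, Fintype.sum_prod_type,
    closedNbhdSum_corona_top_inr, sum_const, card_univ, smul_eq_mul, sum_mul,
    mul_comm (Fintype.card β)]

/-- The least `k` with `n * (m + 1) ≤ 2 * (n + k * m)`: with all centres satisfied, `k` blocks of
weight at least `1` give the corona of a graph on `n` vertices with `K_m` a majority. It is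
meaningful only for `0 < m`, since dividing by `2 * 0` gives `0`. -/
def minHeavyBlocks (n m : ℕ) : ℕ :=
  n * (m - 1) ⌈/⌉ (2 * m)

theorem minHeavyBlocks_le_iff {n m k : ℕ} (hm : 0 < m) :
    minHeavyBlocks n m ≤ k ↔ n * (m + 1) ≤ 2 * (n + k * m) := by
  obtain ⟨m, rfl⟩ := Nat.exists_eq_succ_of_ne_zero hm.ne'
  rw [minHeavyBlocks, ceilDiv_le_iff_le_mul (by omega), Nat.succ_sub_one]
  constructor <;> intro h <;> grind

end Blocks

section LowerBound

variable {α β : Type*} [Fintype α] [Fintype β] {G : SimpleGraph α} {H : SimpleGraph β}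
  {f : α ⊕ α × β → ℤ}

theorem IsMRDF.exists_eq_two_of_leaf_eq_neg_one (hf : IsMRDF (corona G H) f) {a : α} {b : β}
    (hb : f (.inr (a, b)) = -1) : f (.inl a) = 2 ∨ ∃ b', f (.inr (a, b')) = 2 := by
  obtain ⟨a' | ⟨a', b'⟩, hadj, htwo⟩ := hf.2.2 _ hb
  · obtain rfl : a' = a := hadj
    exact .inl htwo
  · obtain rfl : a = a' := hadj.1
    exact .inr ⟨b', htwo⟩

theorem IsMRDF.two_sub_card_le_blockWeight (hf : IsMRDF (corona G H) f)
    (hβ : 2 ≤ Fintype.card β) (a : α) : 2 - (Fintype.card β : ℤ) ≤ blockWeight f a := by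
  have hcentre := hf.neg_one_le (.inl a)
  have leaf_nonneg (b : β) : 0 ≤ f (.inr (a, b)) + 1 := by
    linarith [hf.neg_one_le (.inr (a, b))]
  have sum_leaf_add_one :
      ∑ b, (f (.inr (a, b)) + 1) = ∑ b, f (.inr (a, b)) + Fintype.card β := by
    simp [sum_add_distrib]
  unfold blockWeight
  by_cases hneg : ∃ b, f (.inr (a, b)) = -1
  · obtain ⟨b, hb⟩ := hneg
    obtain htwo | ⟨b', htwo⟩ := hf.exists_eq_two_of_leaf_eq_neg_one hb
    · have := sum_nonneg fun b (_ : b ∈ univ) ↦ leaf_nonneg b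
      linarith
    · have := single_le_sum (fun b _ ↦ leaf_nonneg b) (mem_univ b')
      linarith
  · have one_le_leaf (b : β) : 1 ≤ f (.inr (a, b)) := by
      have leaf_ne : f (.inr (a, b)) ≠ -1 := fun h ↦ hneg ⟨b, h⟩
      have := hf.1 (.inr (a, b))
      omega
    have := card_nsmul_le_sum univ _ 1 fun b _ ↦ one_le_leaf b
    simp only [card_univ, nsmul_eq_mul, mul_one] at this
    omega

theorem IsMRDF.minHeavyBlocks_le_card_heavyBlocks (hf : IsMRDF (corona G (⊤ : SimpleGraph β)) f)
    (hβ : 0 < Fintype.card β) :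
    minHeavyBlocks (Fintype.card α) (Fintype.card β) ≤ #(heavyBlocks f) := by
  rw [minHeavyBlocks_le_iff hβ]
  calc Fintype.card α * (Fintype.card β + 1)
      = Fintype.card (α ⊕ α × β) := by rw [Fintype.card_sum, Fintype.card_prod]; ring
    _ ≤ 2 * #{v | 1 ≤ closedNbhdSum (corona G (⊤ : SimpleGraph β)) f v} := by convert hf.2.1
    _ ≤ 2 * (Fintype.card α + #(heavyBlocks f) * Fintype.card β) := by
        rw [card_filter_closedNbhdSum_corona_top]
        gcongr
        exact card_le_univ _

theorem IsMRDF.le_sum (hf : IsMRDF (corona G (⊤ : SimpleGraph β)) f)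
    (hβ : 2 ≤ Fintype.card β) :
    (Fintype.card α : ℤ) * (2 - Fintype.card β) +
      minHeavyBlocks (Fintype.card α) (Fintype.card β) * (Fintype.card β - 1) ≤ ∑ v, f v := by
  classical
  have hm : (0 : ℤ) ≤ Fintype.card β - 1 := by omega
  have le_blockWeight (a : α) :
      (2 - (Fintype.card β : ℤ)) + (if a ∈ heavyBlocks f then (Fintype.card β : ℤ) - 1 else 0) ≤
        blockWeight f a := by
    split_ifs with ha
    · linarith [(mem_filter.mp ha).2]
    · linarith [hf.two_sub_card_le_blockWeight hβ a]
  calc (Fintype.card α : ℤ) * (2 - Fintype.card β) +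
        minHeavyBlocks (Fintype.card α) (Fintype.card β) * (Fintype.card β - 1)
      ≤ Fintype.card α * (2 - Fintype.card β) + #(heavyBlocks f) * (Fintype.card β - 1) := by
        gcongr
        exact hf.minHeavyBlocks_le_card_heavyBlocks (by omega)
    _ = ∑ a, ((2 - (Fintype.card β : ℤ)) +
          if a ∈ heavyBlocks f then (Fintype.card β : ℤ) - 1 else 0) := by
        rw [sum_add_distrib, sum_ite_mem, univ_inter, sum_const, sum_const, card_univ,
          nsmul_eq_mul, nsmul_eq_mul]
    _ ≤ ∑ a, blockWeight f a := sum_le_sum fun a _ ↦ le_blockWeight a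
    _ = ∑ v, f v := sum_blockWeight f

end LowerBound

section UpperBound

variable {α β : Type*} [DecidableEq α]

/-- The function on the vertices of a corona with value `2` on every centre, the pattern `g` on the
leaves of the blocks in `S` and `-1` on all other leaves. -/
def blockPattern (S : Finset α) (g : β → ℤ) : α ⊕ α × β → ℤ
  | .inl _ => 2
  | .inr (a, b) => if a ∈ S then g b else -1

variable [Fintype β] {S : Finset α} {g : β → ℤ}

theorem exists_sum_eq_neg_one (hβ : 3 ≤ Fintype.card β) :
    ∃ g : β → ℤ, (∀ b, g b = -1 ∨ g b = 1 ∨ g b = 2) ∧ ∑ b, g b = -1 := by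
  classical
  -- Raising `-1` to `1` on `C` and then to `2` on `D ⊆ C` adds `2 * #C + #D = card β - 1`.
  obtain ⟨C, -, hC⟩ := exists_subset_card_eq
    (show (Fintype.card β - 1) / 2 ≤ #(univ : Finset β) by rw [card_univ]; omega)
  obtain ⟨D, hDC, hD⟩ := exists_subset_card_eq
    (show (Fintype.card β - 1) % 2 ≤ #C by omega)
  refine ⟨fun b ↦ -1 + (if b ∈ C then 2 else 0) + if b ∈ D then 1 else 0, fun b ↦ ?_, ?_⟩
  · have := @hDC b
    grind
  · simp only [sum_add_distrib, sum_const, sum_ite_mem, univ_inter, card_univ, nsmul_eq_mul, hC,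
      hD]
    omega

theorem blockWeight_blockPattern (hg : ∑ b, g b = -1) (a : α) :
    blockWeight (blockPattern S g) a =
      2 - Fintype.card β + if a ∈ S then (Fintype.card β : ℤ) - 1 else 0 := by
  split_ifs with ha
  · simp [blockWeight, blockPattern, ha, hg]
  · simp [blockWeight, blockPattern, ha, sub_eq_add_neg]

variable [Fintype α]

theorem sum_blockPattern (hg : ∑ b, g b = -1) :
    ∑ v, blockPattern S g v =
      (Fintype.card α : ℤ) * (2 - Fintype.card β) + #S * (Fintype.card β - 1) := by
  simp only [← sum_blockWeight, blockWeight_blockPattern hg, sum_add_distrib, sum_ite_mem,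
    univ_inter, sum_const, card_univ, nsmul_eq_mul]

theorem subset_heavyBlocks_blockPattern (hg : ∑ b, g b = -1) :
    S ⊆ heavyBlocks (blockPattern S g) := by
  intro a ha
  simp [heavyBlocks, blockWeight_blockPattern hg, ha]

theorem one_le_closedNbhdSum_blockPattern_inl {G : SimpleGraph α} [DecidableRel G.Adj]
    (H : SimpleGraph β) (hg : ∀ b, -1 ≤ g b) {a : α} (ha : Fintype.card β ≤ 2 * G.degree a + 1) :
    1 ≤ closedNbhdSum (corona G H) (blockPattern S g) (.inl a) := by
  have neg_one_le_leaf (b : β) : -1 ≤ blockPattern S g (.inr (a, b)) := by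
    simp only [blockPattern]
    split_ifs
    exacts [hg b, le_rfl]
  have neg_card_le_sum := card_nsmul_le_sum univ _ (-1) fun b _ ↦ neg_one_le_leaf b
  have sum_centres : closedNbhdSum G (fun u ↦ blockPattern S g (.inl u)) a =
      (G.degree a + 1) * 2 := closedNbhdSum_const G 2 a
  rw [closedNbhdSum_corona_inl, sum_centres]
  simp only [card_univ, nsmul_eq_mul] at neg_card_le_sum
  omega

theorem isMRDF_blockPattern {G : SimpleGraph α} [DecidableRel G.Adj]
    (hG : ∀ a, Fintype.card β ≤ 2 * G.degree a + 1) (hβ : 0 < Fintype.card β)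
    (hS : minHeavyBlocks (Fintype.card α) (Fintype.card β) ≤ #S)
    (hg : ∀ b, g b = -1 ∨ g b = 1 ∨ g b = 2) (hsum : ∑ b, g b = -1) :
    IsMRDF (corona G (⊤ : SimpleGraph β)) (blockPattern S g) := by
  refine ⟨?values, ?majority, ?roman⟩
  case values =>
    rintro (a | ⟨a, b⟩)
    · exact .inr (.inr rfl)
    · have := hg b
      grind [blockPattern]
  case majority =>
    have neg_one_le (b : β) : -1 ≤ g b := by have := hg b; omega
    have centres_eq_univ : ({a | 1 ≤ closedNbhdSum (corona G (⊤ : SimpleGraph β))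
        (blockPattern S g) (.inl a)} : Finset α) = univ :=
      filter_true_of_mem fun a _ ↦ one_le_closedNbhdSum_blockPattern_inl ⊤ neg_one_le (hG a)
    calc Fintype.card (α ⊕ α × β)
        = Fintype.card α * (Fintype.card β + 1) := by
          rw [Fintype.card_sum, Fintype.card_prod]; ring
      _ ≤ 2 * (Fintype.card α + #S * Fintype.card β) := (minHeavyBlocks_le_iff hβ).mp hS
      _ ≤ 2 * (Fintype.card α + #(heavyBlocks (blockPattern S g)) * Fintype.card β) := by
          gcongr
          exact subset_heavyBlocks_blockPattern hsum
      _ = _ := by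
          rw [← card_univ, ← centres_eq_univ, ← card_filter_closedNbhdSum_corona_top]
  case roman =>
    rintro (a | ⟨a, b⟩) h
    · simp [blockPattern] at h
    · exact ⟨.inl a, rfl, rfl⟩

end UpperBound

end MRD

open MRD in
theorem mrdNum_corona_K3_K3_general {α β : Type*} [Fintype α] [Fintype β] {G : SimpleGraph α}
    [DecidableRel G.Adj] (hG : ∀ a, Fintype.card β ≤ 2 * G.degree a + 1)
    (hβ : 3 ≤ Fintype.card β) :
    mrdNum (corona G (⊤ : SimpleGraph β)) =
      Fintype.card α * (2 - Fintype.card β) +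
        minHeavyBlocks (Fintype.card α) (Fintype.card β) * (Fintype.card β - 1) := by
  classical
  have minHeavyBlocks_le_card : minHeavyBlocks (Fintype.card α) (Fintype.card β) ≤
      #(univ : Finset α) := by
    rw [card_univ, minHeavyBlocks_le_iff (by omega)]
    nlinarith
  obtain ⟨S, -, hS⟩ := exists_subset_card_eq minHeavyBlocks_le_card
  obtain ⟨g, hg, hsum⟩ := exists_sum_eq_neg_one hβ
  have attained : IsMRDF (corona G (⊤ : SimpleGraph β)) (blockPattern S g) :=
    isMRDF_blockPattern hG (by omega) hS.ge hg hsum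
  refine IsLeast.csInf_eq ⟨⟨blockPattern S g, attained, ?_⟩, ?_⟩
  · rw [sum_blockPattern hsum, hS]
  · rintro _ ⟨f, hf, rfl⟩
    exact hf.le_sum (by omega)

/-- The corona `K_3 ∘ K_3` satisfies `γ_MR(K_3 ∘ K_3) = -1`. -/
theorem mrdNum_corona_K3_K3 :
    MRD.mrdNum (MRD.corona (⊤ : SimpleGraph (Fin 3)) (⊤ : SimpleGraph (Fin 3))) = -1 := by
  rw [mrdNum_corona_K3_K3_general (by simp) (by simp)]
  decide
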